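/- Let X, Y be complex Banach spaces and let f : X → Y be a holomorphic mapping (i.e., f is analytic at every point of X). Then the restriction of f to every bounded subset of X is weakly uniformly continuous if and only if there exist a complex Banach space Z, a compact operator S : X → Z, and a holomorphic mapping g : Z → Y whose restriction to every bounded subset of Z is weakly uniformly continuous, such that f = g ∘ S. -/

import Mathlib

/-!
Let `f` be entire and weakly uniformly continuous on bounded sets. The factorization is built from
an absolutely convex set `C = {∑ aᵢ dᵢ : dᵢ ∈ Dᵢ}` of finite sums, where `aᵢ → ∞` and `Dᵢ` is the
unit ball of `X` cut down by a weak neighbourhood of `0`. If the `Dᵢ` are chosen small enough, a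
telescoping argument over the partial sums shows that `f` is bounded on every multiple `k • C`
(`exists_pieces_bounded`), while `Dᵢ ⊆ aᵢ⁻¹ • C` and the finite nets of the unit ball modulo `Dᵢ`
make the unit ball of `X` totally bounded for the gauge of `C` (`isCompactOperator_of_pieces`).

Let `Z₁` and `Z₂` be the completions of `X` for the gauges with weights `aᵢ = 2 ^ i` and
`aᵢ = 4 ^ i`, with `T₁ : X → Z₁` and `T₂ : X → Z₂` the canonical maps. Both are compact, and so is the
connecting map `J : Z₁ → Z₂` (`isCompactOperator_link`). As `f` is bounded on bounded sets for the
second gauge, Cauchy's estimates and polarization bound its Taylor coefficients at `0` in that gauge;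
they extend to `Z₂` and define an entire map `g` with `f = g ∘ T₂` (`exists_entire_factor`). Then
`f = (g ∘ J) ∘ T₁`, and `g ∘ J` is weakly uniformly continuous on bounded sets because `J` is compact
(`weaklyUnifContOn_comp_compact`).

Conversely, if `f = g ∘ S` then functionals controlling `g` on the bounded set `S(B)` pull back
along `S` to functionals controlling `f` on `B`.
-/

open Filter Topology

universe u

/-- A mapping between complex Banach spaces is weakly uniformly continuous on a set `B` if for
every `ε > 0` there are finitely many continuous linear functionals `φ₁, …, φ_n` and `δ > 0`
such that `‖f x − f y‖ < ε` whenever `x, y ∈ B` satisfy `|φ_i (x − y)| < δ` for all `i`. -/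
def WeaklyUnifContOn {X Y : Type u}
    [NormedAddCommGroup X] [NormedSpace ℂ X] [NormedAddCommGroup Y] [NormedSpace ℂ Y]
    (f : X → Y) (B : Set X) : Prop :=
  ∀ ε > (0 : ℝ), ∃ (n : ℕ) (φ : Fin n → X →L[ℂ] ℂ) (δ : ℝ), 0 < δ ∧
    ∀ x ∈ B, ∀ y ∈ B, (∀ i, ‖φ i (x - y)‖ < δ) → ‖f x - f y‖ < ε

/-! ### Polarization -/

/-- The sum pairs off under toggling an element `j ∉ t`. -/
lemma sum_supersets_neg_one_pow {n : ℕ} (t : Finset (Fin n)) (ht : t ≠ Finset.univ) :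
    ∑ s : Finset (Fin n), (if t ⊆ s then (-1 : ℂ) ^ s.card else 0) = 0 := by
  classical
  obtain ⟨j, hj⟩ : ∃ j, j ∉ t := by
    by_contra! h
    exact ht (Finset.eq_univ_iff_forall.2 h)
  refine Finset.sum_involution (fun s _ => if j ∈ s then s.erase j else insert j s) ?_ ?_ ?_ ?_
  · intro s _
    by_cases hs : j ∈ s
    · have h1 : t ⊆ s.erase j ↔ t ⊆ s := by
        rw [Finset.subset_erase]; simp [hj]
      have h2 := Finset.card_erase_add_one hs
      simp only [hs, if_true, h1]
      split_ifs
      · rw [← h2, pow_succ]; ring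
      · simp
    · have h1 : t ⊆ insert j s ↔ t ⊆ s := Finset.subset_insert_iff_of_notMem hj
      have h2 := Finset.card_insert_of_notMem hs
      simp only [hs, if_false, h1]
      split_ifs
      · rw [h2, pow_succ]; ring
      · simp
  · intro s _ _ h
    by_cases hs : j ∈ s
    · simp only [hs, if_true] at h
      exact Finset.erase_ne_self.2 hs h
    · simp only [hs, if_false] at h
      exact hs (h ▸ Finset.mem_insert_self j s)
  · simp
  · intro s _
    by_cases hs : j ∈ s <;> simp [hs]

/-- Polarization: the diagonal values of a multilinear map, sampled at the subset sums of `v`,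
recover its symmetrization. Expanding the left side by multilinearity, only the bijective index
maps survive the alternating sum. -/
lemma MultilinearMap.polarization_sum {X Y : Type*} [AddCommGroup X] [Module ℂ X]
    [AddCommGroup Y] [Module ℂ Y] {n : ℕ} (A : MultilinearMap ℂ (fun _ : Fin n => X) Y)
    (v : Fin n → X) :
    ∑ s : Finset (Fin n), (-1 : ℂ) ^ s.card • A (fun _ => ∑ i ∈ s, v i) =
      (-1 : ℂ) ^ n • ∑ σ : Equiv.Perm (Fin n), A (v ∘ σ) := by
  classical
  have h1 : ∀ s : Finset (Fin n), (-1 : ℂ) ^ s.card • A (fun _ => ∑ i ∈ s, v i) =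
      ∑ r : Fin n → Fin n,
        (if Finset.univ.image r ⊆ s then (-1 : ℂ) ^ s.card else 0) • A (v ∘ r) := by
    intro s
    rw [A.map_sum_finset (fun _ i => v i) (fun _ => s), Finset.smul_sum]
    rw [← Finset.sum_subset (Finset.subset_univ (Fintype.piFinset fun _ : Fin n => s))]
    · refine Finset.sum_congr rfl fun r hr => ?_
      rw [if_pos]
      · rfl
      · simpa [Finset.image_subset_iff] using hr
    · intro r _ hr
      rw [if_neg, zero_smul]
      simpa [Finset.image_subset_iff] using hr
  simp_rw [h1]
  rw [Finset.sum_comm]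
  simp_rw [← Finset.sum_smul]
  have h2 : ∀ r : Fin n → Fin n,
      (∑ s : Finset (Fin n), (if Finset.univ.image r ⊆ s then (-1 : ℂ) ^ s.card else 0)) =
        if Function.Bijective r then (-1 : ℂ) ^ n else 0 := by
    intro r
    split_ifs with h
    · rw [Finset.image_univ_of_surjective h.2]
      simp [Finset.univ_subset_iff]
    · refine sum_supersets_neg_one_pow _ fun h' => h ?_
      rw [← Finite.surjective_iff_bijective]
      intro y
      have hy := Finset.mem_univ y
      rw [← h'] at hy
      simpa using hy
  simp_rw [h2, ite_smul, zero_smul]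
  rw [← Finset.sum_filter, Finset.smul_sum]
  symm
  refine Finset.sum_bij (fun σ _ => (σ : Fin n → Fin n)) ?_ ?_ ?_ ?_
  · exact fun σ _ => Finset.mem_filter.2 ⟨Finset.mem_univ _, σ.bijective⟩
  · intro σ _ τ _ h; exact Equiv.coe_fn_injective h
  · intro r hr
    exact ⟨Equiv.ofBijective r (by simpa using hr), Finset.mem_univ _, rfl⟩
  · intro σ _; rfl

/-- A bound for a symmetric multilinear map on the diagonal, with respect to a seminorm `q`, gives
a bound in all arguments. The factorial in the hypothesis cancels the `n!` of the polarization
formula, and `q x ≤ n` is what holds for a sum of at most `n` vectors from the unit ball. -/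
lemma norm_le_of_diagonal_bound {X Y : Type*} [AddCommGroup X] [Module ℂ X]
    [NormedAddCommGroup Y] [NormedSpace ℂ Y] {n : ℕ}
    (A : MultilinearMap ℂ (fun _ : Fin n => X) Y)
    (hA : ∀ (v : Fin n → X) (σ : Equiv.Perm (Fin n)), A (v ∘ σ) = A v)
    (q : Seminorm ℂ X) (K : ℝ) (hK : ∀ x, q x ≤ n → ‖A fun _ => x‖ ≤ n.factorial * K)
    (v : Fin n → X) : ‖A v‖ ≤ 2 ^ n * K * ∏ i, q (v i) := by
  have key : ∀ v : Fin n → X, (∀ i, q (v i) ≤ 1) → ‖A v‖ ≤ 2 ^ n * K := by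
    intro v hv
    have h := A.polarization_sum v
    simp_rw [hA] at h
    have h3 : ‖∑ s : Finset (Fin n), (-1 : ℂ) ^ s.card • A (fun _ => ∑ i ∈ s, v i)‖ ≤
        ∑ s : Finset (Fin n), (n.factorial * K : ℝ) := by
      refine norm_sum_le_of_le _ fun s _ => ?_
      rw [norm_smul, norm_pow, norm_neg, norm_one, one_pow, one_mul]
      refine hK _ ((Finset.le_sum_of_subadditive q (map_zero q).le (map_add_le_add q) s v).trans ?_)
      calc ∑ i ∈ s, q (v i) ≤ ∑ i ∈ s, (1 : ℝ) := Finset.sum_le_sum fun i _ => hv i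
        _ ≤ n := by simpa using Finset.card_le_univ s
    rw [h] at h3
    simp only [Finset.sum_const, Finset.card_univ, Fintype.card_perm, Fintype.card_fin,
      norm_smul, norm_pow, norm_neg, norm_one, one_pow, one_mul, Fintype.card_finset,
      nsmul_eq_mul, ← Nat.cast_smul_eq_nsmul ℂ, Complex.norm_natCast] at h3
    have hpos : (0 : ℝ) < n.factorial := by exact_mod_cast n.factorial_pos
    push_cast at h3
    refine le_of_mul_le_mul_left (h3.trans (le_of_eq ?_)) hpos
    ring
  -- `q` may vanish on nonzero vectors, so normalise by `q (v i) + ε` and let `ε → 0`.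
  have hε : ∀ ε > (0 : ℝ), ‖A v‖ ≤ 2 ^ n * K * ∏ i, (q (v i) + ε) := by
    intro ε hε
    have hp : ∀ i, 0 < q (v i) + ε := fun i => add_pos_of_nonneg_of_pos (apply_nonneg q _) hε
    have h1 := key (fun i => ((q (v i) + ε : ℝ) : ℂ)⁻¹ • v i) fun i => by
      rw [map_smul_eq_mul, norm_inv, Complex.norm_real, Real.norm_of_nonneg (hp i).le,
        inv_mul_le_iff₀ (hp i)]
      linarith
    rw [A.map_smul_univ (fun i => ((q (v i) + ε : ℝ) : ℂ)⁻¹) v, norm_smul, norm_prod] at h1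
    simp_rw [norm_inv, Complex.norm_real, Real.norm_of_nonneg (hp _).le] at h1
    rw [Finset.prod_inv_distrib, inv_mul_le_iff₀ (Finset.prod_pos fun i _ => hp i)] at h1
    linarith
  have hlim : Tendsto (fun ε : ℝ => 2 ^ n * K * ∏ i, (q (v i) + ε)) (𝓝[>] 0)
      (𝓝 (2 ^ n * K * ∏ i, (q (v i) + 0))) := by
    apply Tendsto.mono_left _ nhdsWithin_le_nhds
    exact Continuous.tendsto (by fun_prop) 0
  simp only [add_zero] at hlim
  exact ge_of_tendsto hlim (eventually_nhdsWithin_of_forall hε)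

/-! ### Extension of an entire map along a map with dense range -/

/-- A multilinear map that is bounded with respect to the seminorm `‖T ·‖` extends along `T` to a
continuous multilinear map on `Z`. The arguments are extended one at a time, by currying. -/
lemma exists_multilinear_extension {X Z Y : Type*} [AddCommGroup X] [Module ℂ X]
    [NormedAddCommGroup Z] [NormedSpace ℂ Z] [NormedAddCommGroup Y] [NormedSpace ℂ Y]
    [CompleteSpace Y] (T : X →ₗ[ℂ] Z) (hT : DenseRange T) :
    ∀ (n : ℕ) (A : MultilinearMap ℂ (fun _ : Fin n => X) Y) (C : ℝ), 0 ≤ C →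
      (∀ v, ‖A v‖ ≤ C * ∏ i, ‖T (v i)‖) →
      ∃ A' : ContinuousMultilinearMap ℂ (fun _ : Fin n => Z) Y,
        ‖A'‖ ≤ C ∧ ∀ v, A' (fun i => T (v i)) = A v := by
  intro n
  induction n with
  | zero =>
    intro A C hC h
    refine ⟨ContinuousMultilinearMap.constOfIsEmpty ℂ _ (A 0), ?_, ?_⟩
    · rw [ContinuousMultilinearMap.norm_constOfIsEmpty]
      simpa using h 0
    · intro v
      rw [ContinuousMultilinearMap.constOfIsEmpty_apply, Subsingleton.elim v 0]
  | succ n ih =>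
    intro A C hC h
    have h1 : ∀ x : X, ∃ A' : ContinuousMultilinearMap ℂ (fun _ : Fin n => Z) Y,
        ‖A'‖ ≤ C * ‖T x‖ ∧ ∀ v, A' (fun i => T (v i)) = A.curryLeft x v := by
      intro x
      refine ih (A.curryLeft x) _ (by positivity) fun v => ?_
      have := h (Fin.cons x v)
      rw [Fin.prod_univ_succ] at this
      simpa [mul_assoc] using this
    choose L hL1 hL2 using h1
    -- density of the range makes the extensions unique, hence linear in the first argument
    have huniq : ∀ B B' : ContinuousMultilinearMap ℂ (fun _ : Fin n => Z) Y,
        (∀ v : Fin n → X, B (fun i => T (v i)) = B' (fun i => T (v i))) → B = B' := by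
      intro B B' hB
      have hd : DenseRange (Pi.map fun _ : Fin n => T) := DenseRange.piMap fun _ => hT
      have := hd.equalizer B.cont B'.cont (funext hB)
      exact DFunLike.coe_injective this
    let Llin : X →ₗ[ℂ] ContinuousMultilinearMap ℂ (fun _ : Fin n => Z) Y :=
      { toFun := L
        map_add' := fun x y => huniq _ _ fun v => by simp [hL2]
        map_smul' := fun c x => huniq _ _ fun v => by simp [hL2] }
    refine ⟨(Llin.extendOfNorm T).uncurryLeft, ?_, fun v => ?_⟩
    · rw [ContinuousLinearMap.uncurryLeft_norm]
      exact LinearMap.opNorm_extendOfNorm_le hT hC hL1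
    · rw [ContinuousLinearMap.uncurryLeft_apply, LinearMap.extendOfNorm_eq hT ⟨C, hL1⟩]
      have := hL2 (v 0) (Fin.tail v)
      rw [MultilinearMap.curryLeft_apply, Fin.cons_self_tail] at this
      exact this

lemma norm_le_of_dense_bound {X Z Y : Type*} [NormedAddCommGroup Z] [NormedSpace ℂ Z]
    [NormedAddCommGroup Y] [NormedSpace ℂ Y] {T : X → Z} (hT : DenseRange T) {n : ℕ}
    (A : ContinuousMultilinearMap ℂ (fun _ : Fin n => Z) Y) {C : ℝ} (hC : 0 ≤ C)
    (h : ∀ v : Fin n → X, ‖A fun i => T (v i)‖ ≤ C * ∏ i, ‖T (v i)‖) : ‖A‖ ≤ C := by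
  refine ContinuousMultilinearMap.opNorm_le_bound hC fun z => ?_
  have hd : DenseRange (Pi.map fun _ : Fin n => T) := DenseRange.piMap fun _ => hT
  refine hd.induction_on (p := fun z => ‖A z‖ ≤ C * ∏ i, ‖z i‖) z
    (isClosed_le A.cont.norm ?_) h
  fun_prop

/-- If the entire map `f` is bounded on each set `{x | ‖T x‖ < k}` and `T` has dense range, then `f`
factors as an entire map after `T`. The Taylor coefficients of `f` at `0` extend along `T`, and the
extended series has infinite radius of convergence. -/
lemma exists_entire_factor {X Z Y : Type*} [NormedAddCommGroup X] [NormedSpace ℂ X]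
    [NormedAddCommGroup Z] [NormedSpace ℂ Z] [NormedAddCommGroup Y] [NormedSpace ℂ Y]
    [CompleteSpace Y] (T : X →L[ℂ] Z) (hT : DenseRange T) (f : X → Y)
    (hf : ∀ x, AnalyticAt ℂ f x)
    (hbd : ∀ k : ℕ, ∃ M, ∀ x, ‖T x‖ < k → ‖f x‖ ≤ M) :
    ∃ g : Z → Y, (∀ z, AnalyticAt ℂ g z) ∧ ∀ x, g (T x) = f x := by
  have hcd : ContDiff ℂ ⊤ f := AnalyticOnNhd.contDiff fun x _ => hf x
  have hline : ∀ x : X, Differentiable ℂ fun t : ℂ => f (t • x) := fun x =>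
    (hcd.differentiable (by simp)).comp (differentiable_id.smul_const x)
  have hderiv : ∀ (n : ℕ) (x : X), iteratedDeriv n (fun t : ℂ => f (t • x)) 0 =
      iteratedFDeriv ℂ n f 0 fun _ => x := by
    intro n x
    have := (ContinuousLinearMap.toSpanSingleton ℂ x).iteratedFDeriv_comp_right hcd 0
      (i := n) le_top
    rw [iteratedDeriv_eq_iteratedFDeriv]
    have h2 : (fun t : ℂ => f (t • x)) = f ∘ (ContinuousLinearMap.toSpanSingleton ℂ x) := by
      ext t; simp
    rw [h2, this]
    simp
  -- Cauchy estimates on complex lines through `0`, then polarization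
  have hcoef : ∀ k : ℕ, 0 < k → ∃ M, 0 ≤ M ∧ ∀ (n : ℕ) (v : Fin n → X),
      ‖iteratedFDeriv ℂ n f 0 v‖ ≤ 2 ^ n * (M * ((n + 1) / k) ^ n) * ∏ i, ‖T (v i)‖ := by
    intro k hk
    obtain ⟨M, hM⟩ := hbd k
    have hk' : (0 : ℝ) < k := by exact_mod_cast hk
    have hM0 : 0 ≤ M := (norm_nonneg _).trans (hM 0 (by simpa using hk'))
    refine ⟨M, hM0, fun n v => ?_⟩
    refine norm_le_of_diagonal_bound (iteratedFDeriv ℂ n f 0).toMultilinearMap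
      (fun v σ => hcd.contDiffAt.iteratedFDeriv_comp_perm v σ)
      ((normSeminorm ℂ Z).comp T.toLinearMap) _ (fun x hx => ?_) v
    have hx' : ‖T x‖ ≤ n := hx
    have hr : (0 : ℝ) < k / (n + 1) := by positivity
    have := Complex.norm_iteratedDeriv_le_of_forall_mem_sphere_norm_le (c := 0) (C := M) n hr
      (hline x).diffContOnCl fun t ht => hM _ ?_
    · rw [hderiv] at this
      refine this.trans (le_of_eq ?_)
      rw [mul_div_assoc, div_eq_mul_inv, ← inv_pow, inv_div]
    · rw [map_smul, norm_smul, mem_sphere_zero_iff_norm.1 ht, div_mul_eq_mul_div,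
        div_lt_iff₀ (by positivity)]
      gcongr
      linarith
  have hext : ∀ n : ℕ, ∃ A' : ContinuousMultilinearMap ℂ (fun _ : Fin n => Z) Y,
      ∀ v, A' (fun i => T (v i)) = iteratedFDeriv ℂ n f 0 v := by
    intro n
    obtain ⟨M, hM0, hM⟩ := hcoef 1 one_pos
    obtain ⟨A', -, h⟩ := exists_multilinear_extension T.toLinearMap hT n
      (iteratedFDeriv ℂ n f 0).toMultilinearMap _ (by positivity) (hM n)
    exact ⟨A', h⟩
  choose A hA using hext
  let p : FormalMultilinearSeries ℂ Z Y := fun n => ((n.factorial : ℂ))⁻¹ • A n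
  have hrad : p.radius = ⊤ := by
    refine ENNReal.eq_top_of_forall_nnreal_le fun r => ?_
    -- any `k ≥ 2 e r` makes the `n`-th term at most `M * e`
    obtain ⟨k, hk⟩ := exists_nat_gt (2 * Real.exp 1 * r)
    have hk' : (0 : ℝ) < k := lt_of_le_of_lt (by positivity) hk
    obtain ⟨M, hM0, hM⟩ := hcoef k (by exact_mod_cast hk')
    refine p.le_radius_of_bound (M * Real.exp 1) fun n => ?_
    have h1 : ‖A n‖ ≤ 2 ^ n * (M * ((n + 1) / k) ^ n) :=
      norm_le_of_dense_bound hT (A n) (by positivity) fun v => by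
        rw [hA]; exact hM n v
    have h2 : ((n : ℝ) + 1) ^ n / n.factorial ≤ Real.exp 1 ^ n * Real.exp 1 := by
      have := Real.pow_div_factorial_le_exp ((n : ℝ) + 1) (by positivity) n
      rwa [Real.exp_add, ← Real.exp_one_pow n] at this
    calc ‖p n‖ * (r : ℝ) ^ n = (n.factorial : ℝ)⁻¹ * ‖A n‖ * (r : ℝ) ^ n := by
          simp [p, norm_smul]
      _ ≤ (n.factorial : ℝ)⁻¹ * (2 ^ n * (M * ((n + 1) / k) ^ n)) * (r : ℝ) ^ n := by gcongr
      _ = M * (((n : ℝ) + 1) ^ n / n.factorial) * (2 * r / k) ^ n := by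
          simp only [mul_pow, div_eq_mul_inv, inv_pow]; ring
      _ ≤ M * (Real.exp 1 ^ n * Real.exp 1) * (2 * r / k) ^ n := by gcongr
      _ = M * Real.exp 1 * (2 * Real.exp 1 * r / k) ^ n := by
          simp only [mul_pow, div_eq_mul_inv]; ring
      _ ≤ M * Real.exp 1 * 1 := by
          gcongr
          refine pow_le_one₀ (by positivity) ?_
          rw [div_le_one hk']; exact hk.le
      _ = M * Real.exp 1 := mul_one _
  have hp := p.hasFPowerSeriesOnBall (by simp [hrad])
  rw [hrad] at hp
  refine ⟨p.sum, fun z => hp.analyticAt_of_mem (by simp), fun x => ?_⟩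
  have h1 := Complex.hasSum_taylorSeries_of_entire (hline x) 0 1
  have h2 := hp.hasSum (y := T x) (by simp)
  simp only [sub_zero, one_pow, one_smul, hderiv] at h1
  rw [zero_add] at h2
  refine h2.unique ?_
  convert h1 using 2 with n
  simp [p, ← hA]

/-! ### Completions, total boundedness and compact operators -/

/-- The Hausdorff completion of a seminormed space, as a linear map into a Banach space that
realizes the seminorm. -/
lemma exists_banach_of_seminorm {V : Type u} [AddCommGroup V] [Module ℂ V]
    (q : Seminorm ℂ V) :
    ∃ (Z : Type u) (_ : NormedAddCommGroup Z) (_ : NormedSpace ℂ Z) (_ : CompleteSpace Z)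
      (T : V →ₗ[ℂ] Z), (∀ x, ‖T x‖ = q x) ∧ DenseRange T := by
  let i1 : SeminormedAddCommGroup V := q.toAddGroupSeminorm.toSeminormedAddCommGroup
  let i2 : NormedSpace ℂ V :=
    { norm_smul_le := fun c x => (map_smul_eq_mul q c x).le }
  refine ⟨UniformSpace.Completion V, inferInstance, inferInstance, inferInstance,
    (UniformSpace.Completion.toComplL (𝕜 := ℂ) (E := V)).toLinearMap, fun x => ?_, ?_⟩
  · exact UniformSpace.Completion.norm_coe x
  · exact UniformSpace.Completion.denseRange_coe

lemma totallyBounded_of_approx {Z : Type*} [PseudoMetricSpace Z] {s : Set Z}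
    (h : ∀ ε > 0, ∃ K : Set Z, TotallyBounded K ∧ ∀ x ∈ s, ∃ y ∈ K, dist x y < ε) :
    TotallyBounded s := by
  refine Metric.totallyBounded_iff.2 fun ε hε => ?_
  obtain ⟨K, hK, hs⟩ := h (ε / 2) (half_pos hε)
  obtain ⟨t, ht, hKt⟩ := Metric.totallyBounded_iff.1 hK (ε / 2) (half_pos hε)
  refine ⟨t, ht, fun x hx => ?_⟩
  obtain ⟨y, hy, hxy⟩ := hs x hx
  obtain ⟨z, hz, hyz⟩ := Set.mem_iUnion₂.1 (hKt hy)
  refine Set.mem_iUnion₂.2 ⟨z, hz, ?_⟩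
  have := dist_triangle x y z
  rw [Metric.mem_ball] at *
  linarith

/-- A compact operator is weak-to-norm uniformly continuous on bounded sets: norming functionals
of the points of a finite net detect the norm. A continuous map is uniformly continuous on the
relatively compact image, so the composition is weakly uniformly continuous. -/
lemma weaklyUnifContOn_comp_compact {Z₁ Z₂ Y : Type u}
    [NormedAddCommGroup Z₁] [NormedSpace ℂ Z₁] [NormedAddCommGroup Z₂] [NormedSpace ℂ Z₂]
    [NormedAddCommGroup Y] [NormedSpace ℂ Y] (J : Z₁ →L[ℂ] Z₂) (hJ : IsCompactOperator J)
    (g : Z₂ → Y) (hg : Continuous g) (B : Set Z₁) (hB : Bornology.IsBounded B) :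
    WeaklyUnifContOn (g ∘ J) B := by
  intro ε hε
  obtain ⟨r, hr⟩ := hB.subset_closedBall 0
  have hcpt : ∀ r : ℝ, IsCompact (closure (J '' Metric.closedBall 0 r)) := fun r =>
    IsCompactOperator.isCompact_closure_image_closedBall (f := J.toLinearMap) hJ r
  have huc := (hcpt r).uniformContinuousOn_of_continuous hg.continuousOn
  obtain ⟨η, hη, hgη⟩ := Metric.uniformContinuousOn_iff.1 huc ε hε
  obtain ⟨t, ht, hcov⟩ := Metric.totallyBounded_iff.1 (hcpt (2 * r)).totallyBounded (η / 4)
    (by positivity)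
  obtain ⟨n, z, -, rfl⟩ := ht.fin_param
  choose ψ hψ1 hψ2 using fun i => exists_dual_vector'' ℂ (z i)
  refine ⟨n, fun i => (ψ i).comp J, η / 4, by positivity, fun x hx y hy hxy => ?_⟩
  have hmem : ∀ x ∈ B, J x ∈ closure (J '' Metric.closedBall 0 r) := fun x hx =>
    subset_closure ⟨x, hr hx, rfl⟩
  have hw : J (x - y) ∈ closure (J '' Metric.closedBall 0 (2 * r)) := by
    refine subset_closure ⟨x - y, ?_, rfl⟩
    have h1 := mem_closedBall_zero_iff.1 (hr hx)
    have h2 := mem_closedBall_zero_iff.1 (hr hy)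
    rw [mem_closedBall_zero_iff]
    linarith [norm_sub_le x y]
  obtain ⟨_, ⟨i, rfl⟩, hi⟩ := Set.mem_iUnion₂.1 (hcov hw)
  rw [mem_ball_iff_norm] at hi
  have h1 : ‖ψ i (J (x - y))‖ < η / 4 := hxy i
  have h2 : ‖ψ i (J (x - y) - z i)‖ ≤ ‖J (x - y) - z i‖ := by
    simpa using (ψ i).le_of_opNorm_le (hψ1 i) (J (x - y) - z i)
  have h3 : ‖z i‖ ≤ ‖ψ i (J (x - y))‖ + ‖ψ i (J (x - y) - z i)‖ := by
    have h4 : ‖z i‖ = ‖ψ i (z i)‖ := by rw [hψ2]; simp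
    have h5 : ψ i (z i) = ψ i (J (x - y)) - ψ i (J (x - y) - z i) := by simp
    rw [h4, h5]
    exact norm_sub_le _ _
  have h6 : ‖J (x - y)‖ < η := by
    have := norm_add_le (J (x - y) - z i) (z i)
    rw [sub_add_cancel] at this
    linarith
  have := hgη (J x) (hmem x hx) (J y) (hmem y hy) (by rwa [dist_eq_norm, ← map_sub])
  rwa [dist_eq_norm] at this

/-! ### Weak pieces of the unit ball -/

/-- A set that behaves like the intersection of the closed unit ball with a basic weak
neighbourhood of `0`: an absolutely convex subset of the unit ball that is a norm neighbourhood
of `0`, and such that finitely many translates of `2 • D`, with centres in the unit ball, cover the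
unit ball. -/
structure IsWeakPiece {X : Type*} [NormedAddCommGroup X] [NormedSpace ℂ X] (D : Set X) :
    Prop where
  balanced : Balanced ℂ D
  convex : Convex ℝ D
  norm_le : ∀ d ∈ D, ‖d‖ ≤ 1
  mem_nhds : D ∈ 𝓝 (0 : X)
  net : ∃ F : Set X, F.Finite ∧ (∀ y ∈ F, ‖y‖ ≤ 1) ∧
    ∀ x, ‖x‖ ≤ 1 → ∃ y ∈ F, ∃ d ∈ D, x - y = (2 : ℝ) • d

/-- Weak uniform continuity on the ball of radius `R`, phrased through a weak piece: moving by at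
most `c` times an element of `D` inside that ball changes `f` by less than `ε`. -/
lemma exists_isWeakPiece {X Y : Type u}
    [NormedAddCommGroup X] [NormedSpace ℂ X] [NormedAddCommGroup Y] [NormedSpace ℂ Y]
    {f : X → Y} (hf : ∀ B : Set X, Bornology.IsBounded B → WeaklyUnifContOn f B)
    (R c ε : ℝ) (hc : 0 ≤ c) (hε : 0 < ε) :
    ∃ D : Set X, IsWeakPiece D ∧ ∀ x y, ‖x‖ ≤ R → ‖y‖ ≤ R → ∀ t : ℝ, 0 ≤ t → t ≤ c →
      ∀ d ∈ D, x - y = t • d → ‖f x - f y‖ < ε := by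
  obtain ⟨n, φ, δ, hδ, h⟩ := hf _ (Metric.isBounded_closedBall (x := (0 : X)) (r := R)) ε hε
  set η : ℝ := δ / (c + 1) with hη
  have hη0 : 0 < η := by positivity
  have hsmul : ∀ (i : Fin n) (t : ℝ) (x : X), ‖φ i (t • x)‖ = |t| * ‖φ i x‖ := by
    intro i t x
    rw [(φ i).map_smul_of_tower, norm_smul, Real.norm_eq_abs]
  refine ⟨{x | ‖x‖ ≤ 1 ∧ ∀ i, ‖φ i x‖ ≤ η}, ⟨?_, ?_, fun d hd => hd.1, ?_, ?_⟩, ?_⟩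
  · refine balanced_iff_smul_mem.2 fun a ha x hx => ⟨?_, fun i => ?_⟩
    · rw [norm_smul]; exact mul_le_one₀ ha (norm_nonneg _) hx.1
    · rw [map_smul, norm_smul]
      exact (mul_le_of_le_one_left (norm_nonneg _) ha).trans (hx.2 i)
  · intro x hx y hy a b ha hb hab
    refine ⟨?_, fun i => ?_⟩
    · calc ‖a • x + b • y‖ ≤ a * ‖x‖ + b * ‖y‖ := by
            refine (norm_add_le _ _).trans (le_of_eq ?_)
            rw [norm_smul, norm_smul, Real.norm_of_nonneg ha, Real.norm_of_nonneg hb]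
        _ ≤ a * 1 + b * 1 := by gcongr; exacts [hx.1, hy.1]
        _ = 1 := by linarith
    · calc ‖φ i (a • x + b • y)‖ ≤ a * ‖φ i x‖ + b * ‖φ i y‖ := by
            rw [map_add]
            refine (norm_add_le _ _).trans (le_of_eq ?_)
            rw [hsmul, hsmul, abs_of_nonneg ha, abs_of_nonneg hb]
        _ ≤ a * η + b * η := by gcongr; exacts [hx.2 i, hy.2 i]
        _ = η := by rw [← add_mul, hab, one_mul]
  · have h1 : ∀ᶠ x : X in 𝓝 0, ‖x‖ ≤ 1 := by
      have : Tendsto (fun x : X => ‖x‖) (𝓝 0) (𝓝 0) := by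
        simpa using (continuous_norm (E := X)).tendsto 0
      exact this.eventually_le_const one_pos
    have h2 : ∀ i, ∀ᶠ x : X in 𝓝 0, ‖φ i x‖ ≤ η := fun i => by
      have : Tendsto (fun x : X => ‖φ i x‖) (𝓝 0) (𝓝 0) := by
        simpa using (φ i).continuous.norm.tendsto 0
      exact this.eventually_le_const hη0
    exact h1.and (eventually_all.2 h2)
  · let Φ : X →L[ℂ] (Fin n → ℂ) := ContinuousLinearMap.pi φ
    have hb : TotallyBounded (Φ '' Metric.closedBall 0 1) :=
      (Bornology.IsBounded.isCompact_closure
        (Φ.lipschitz.isBounded_image Metric.isBounded_closedBall)).totallyBounded.subset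
        subset_closure
    obtain ⟨t, hts, htf, hcov⟩ := Metric.finite_approx_of_totallyBounded hb (2 * η)
      (by positivity)
    obtain ⟨F, hF, hFf, rfl⟩ : ∃ F ⊆ Metric.closedBall (0 : X) 1, F.Finite ∧ Φ '' F = t := by
      obtain ⟨F, hF, hbij⟩ := Set.SurjOn.exists_bijOn_subset (f := Φ) hts
      exact ⟨F, hF, hbij.finite_iff_finite.2 htf, hbij.image_eq⟩
    refine ⟨F, hFf, fun y hy => mem_closedBall_zero_iff.1 (hF hy), fun x hx => ?_⟩
    obtain ⟨_, ⟨y, hy, rfl⟩, hxy⟩ := Set.mem_iUnion₂.1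
      (hcov ⟨x, mem_closedBall_zero_iff.2 hx, rfl⟩)
    have hy1 := mem_closedBall_zero_iff.1 (hF hy)
    refine ⟨y, hy, (1 / 2 : ℝ) • (x - y), ⟨?_, fun i => ?_⟩, ?_⟩
    · rw [norm_smul, Real.norm_of_nonneg (by norm_num)]
      linarith [norm_sub_le x y]
    · have h1 : ‖φ i (x - y)‖ ≤ dist (Φ x) (Φ y) := by
        rw [map_sub, ← dist_eq_norm]
        exact dist_le_pi_dist (Φ x) (Φ y) i
      rw [Metric.mem_ball] at hxy
      rw [hsmul, abs_of_nonneg (by norm_num)]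
      linarith
    · rw [smul_smul]; norm_num
  · intro x y hx hy t ht0 htc d hd hxy
    refine h x (by simpa using hx) y (by simpa using hy) fun i => ?_
    rw [hxy, hsmul, abs_of_nonneg ht0]
    calc t * ‖φ i d‖ ≤ c * η := by gcongr; exact hd.2 i
      _ < (c + 1) * η := by gcongr; linarith
      _ = δ := by rw [hη]; field_simp

lemma bounded_on_balls {X Y : Type u}
    [NormedAddCommGroup X] [NormedSpace ℂ X] [NormedAddCommGroup Y] [NormedSpace ℂ Y]
    {f : X → Y} (hf : ∀ B : Set X, Bornology.IsBounded B → WeaklyUnifContOn f B)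
    (R : ℝ) : ∃ M, ∀ x, ‖x‖ ≤ R → ‖f x‖ ≤ M := by
  wlog hR : 0 < R generalizing R
  · obtain ⟨M, hM⟩ := this 1 one_pos
    exact ⟨M, fun x hx => hM x (by linarith)⟩
  obtain ⟨D, hD, hDf⟩ := exists_isWeakPiece hf R (R * 2) 1 (by positivity) one_pos
  obtain ⟨F, hF, hF1, hnet⟩ := hD.net
  obtain ⟨M, hM⟩ := (hF.image fun y => ‖f (R • y)‖).bddAbove
  refine ⟨M + 1, fun x hx => ?_⟩
  obtain ⟨y, hy, d, hd, h⟩ := hnet (R⁻¹ • x) (by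
    rw [norm_smul, Real.norm_of_nonneg (by positivity), inv_mul_le_iff₀ hR]; linarith)
  have h1 : x - R • y = (R * 2) • d := by
    rw [mul_smul, ← h, smul_sub, smul_inv_smul₀ hR.ne']
  have h2 := hDf x (R • y) hx (by
    rw [norm_smul, Real.norm_of_nonneg hR.le]; nlinarith [hF1 y hy]) _ (by positivity) le_rfl d hd h1
  have h3 : ‖f (R • y)‖ ≤ M := hM ⟨y, hy, rfl⟩
  have := norm_sub_norm_le (f x) (f (R • y))
  linarith

/-! ### Weighted sums of weak pieces -/

/-- The set of all finite sums `∑ aᵢ dᵢ` with `dᵢ ∈ D i`. Up to boundary points it is the unit ball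
of its gauge, the seminorm through which the factorization is made. -/
def weightedSum {X : Type*} [NormedAddCommGroup X] [NormedSpace ℂ X] (a : ℕ → ℝ)
    (D : ℕ → Set X) : Set X :=
  {x | ∃ d : ℕ →₀ X, (∀ i, d i ∈ D i) ∧ x = d.sum fun i y => a i • y}

section WeightedSum

variable {X : Type*} [NormedAddCommGroup X] [NormedSpace ℂ X] {a : ℕ → ℝ} {D : ℕ → Set X}

/-- The sum may be taken over any sufficiently long initial segment of `ℕ`. -/
lemma mem_weightedSum_iff {x : X} :
    x ∈ weightedSum a D ↔ ∃ d : ℕ →₀ X, (∀ i, d i ∈ D i) ∧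
      ∃ m₀, ∀ m ≥ m₀, x = ∑ i ∈ Finset.range m, a i • d i := by
  have key : ∀ d : ℕ →₀ X, ∃ m₀, ∀ m ≥ m₀,
      (d.sum fun i y => a i • y) = ∑ i ∈ Finset.range m, a i • d i := by
    intro d
    obtain ⟨m₀, hm₀⟩ := d.support.exists_nat_subset_range
    refine ⟨m₀, fun m hm => Finsupp.sum_of_support_subset _
      (hm₀.trans (Finset.range_mono hm)) _ (by simp)⟩
  constructor
  · rintro ⟨d, hd, rfl⟩
    exact ⟨d, hd, key d⟩
  · rintro ⟨d, hd, m₀, h⟩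
    obtain ⟨m₁, h₁⟩ := key d
    exact ⟨d, hd, (h (max m₀ m₁) (le_max_left _ _)).trans (h₁ _ (le_max_right _ _)).symm⟩

lemma IsWeakPiece.zero_mem {E : Set X} (hE : IsWeakPiece E) : (0 : X) ∈ E :=
  mem_of_mem_nhds hE.mem_nhds

lemma weightedSum_balanced (hD : ∀ i, IsWeakPiece (D i)) : Balanced ℂ (weightedSum a D) := by
  refine balanced_iff_smul_mem.2 fun c hc x hx => ?_
  obtain ⟨d, hd, m₀, h⟩ := mem_weightedSum_iff.1 hx
  refine mem_weightedSum_iff.2 ⟨c • d, fun i => ?_, m₀, fun m hm => ?_⟩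
  · exact (hD i).balanced.smul_mem hc (hd i)
  · rw [h m hm, Finset.smul_sum]
    exact Finset.sum_congr rfl fun i _ => smul_comm _ _ _

lemma weightedSum_convex (hD : ∀ i, IsWeakPiece (D i)) : Convex ℝ (weightedSum a D) := by
  intro x hx y hy s t hs ht hst
  obtain ⟨d, hd, m₀, h⟩ := mem_weightedSum_iff.1 hx
  obtain ⟨e, he, m₁, h'⟩ := mem_weightedSum_iff.1 hy
  refine mem_weightedSum_iff.2 ⟨s • d + t • e, fun i => ?_, max m₀ m₁, fun m hm => ?_⟩
  · exact (hD i).convex (hd i) (he i) hs ht hst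
  · rw [h m (le_of_max_le_left hm), h' m (le_of_max_le_right hm), Finset.smul_sum,
      Finset.smul_sum, ← Finset.sum_add_distrib]
    refine Finset.sum_congr rfl fun i _ => ?_
    simp only [Finsupp.add_apply, Finsupp.smul_apply, smul_add]
    rw [smul_comm s, smul_comm t]

lemma smul_mem_weightedSum (hD : ∀ i, IsWeakPiece (D i)) {i : ℕ} {y : X} (hy : y ∈ D i) :
    a i • y ∈ weightedSum a D := by
  refine ⟨Finsupp.single i y, fun j => ?_, by simp⟩
  by_cases hj : i = j
  · subst hj; simpa using hy
  · rw [Finsupp.single_eq_of_ne' hj]; exact (hD j).zero_mem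

lemma weightedSum_mem_nhds (hD : ∀ i, IsWeakPiece (D i)) (ha : a 0 = 1) :
    weightedSum a D ∈ 𝓝 (0 : X) :=
  mem_of_superset (hD 0).mem_nhds fun y hy => by
    simpa [ha] using smul_mem_weightedSum (a := a) hD hy

lemma weightedSum_mono (hD : ∀ i, IsWeakPiece (D i)) {b : ℕ → ℝ} (ha : ∀ i, 0 ≤ a i)
    (hb : ∀ i, 0 < b i) (hab : ∀ i, a i ≤ b i) : weightedSum a D ⊆ weightedSum b D := by
  intro x hx
  obtain ⟨d, hd, m₀, h⟩ := mem_weightedSum_iff.1 hx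
  refine mem_weightedSum_iff.2 ⟨Finsupp.onFinset d.support (fun i => (a i / b i) • d i) ?_,
    fun i => ?_, m₀, fun m hm => ?_⟩
  · intro i hi
    rw [Finsupp.mem_support_iff]
    rintro h0
    simp [h0] at hi
  · rw [Finsupp.onFinset_apply]
    exact (hD i).convex.smul_mem_of_zero_mem (hD i).zero_mem (hd i)
      ⟨div_nonneg (ha i) (hb i).le, (div_le_one (hb i)).2 (hab i)⟩
  · rw [h m hm]
    refine Finset.sum_congr rfl fun i _ => ?_
    rw [Finsupp.onFinset_apply, smul_smul, mul_div_cancel₀ _ (hb i).ne']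

lemma gauge_le_of_mem_piece (hD : ∀ i, IsWeakPiece (D i)) {i : ℕ} (hi : 0 < a i) {y : X}
    (hy : y ∈ D i) : gauge (weightedSum a D) y ≤ (a i)⁻¹ := by
  refine gauge_le_of_mem (by positivity) ⟨a i • y, smul_mem_weightedSum hD hy, ?_⟩
  simp [smul_smul, hi.ne']

end WeightedSum

/-- The Banach space obtained by completing `X` under the gauge of a weighted sum; `a 0 = 1` makes
the sum a neighbourhood of `0`, so that the gauge is dominated by a multiple of the norm. -/
lemma exists_banach_of_weightedSum {X : Type u} [NormedAddCommGroup X] [NormedSpace ℂ X]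
    {a : ℕ → ℝ} {D : ℕ → Set X} (hD : ∀ i, IsWeakPiece (D i)) (ha : a 0 = 1) :
    ∃ (Z : Type u) (_ : NormedAddCommGroup Z) (_ : NormedSpace ℂ Z) (_ : CompleteSpace Z)
      (T : X →L[ℂ] Z), (∀ x, ‖T x‖ = gauge (weightedSum a D) x) ∧ DenseRange T := by
  have hnhds := weightedSum_mem_nhds hD ha
  let q : Seminorm ℂ X := gaugeSeminorm (weightedSum_balanced hD) (weightedSum_convex hD)
    (absorbent_nhds_zero hnhds)
  obtain ⟨Z, i1, i2, i3, T, hT, hd⟩ := exists_banach_of_seminorm q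
  obtain ⟨r, hr, hball⟩ := Metric.mem_nhds_iff.1 hnhds
  refine ⟨Z, i1, i2, i3, T.mkContinuous r⁻¹ fun x => ?_, fun x => hT x, hd⟩
  rw [hT]
  change gauge _ x ≤ _
  have := (gauge_mono (absorbent_nhds_zero (Metric.ball_mem_nhds 0 hr)) hball x)
  rwa [gauge_ball hr.le, div_eq_inv_mul] at this

lemma mem_of_gauge_lt_one {X : Type*} [NormedAddCommGroup X] [NormedSpace ℂ X] {a : ℕ → ℝ}
    {D : ℕ → Set X} (hD : ∀ i, IsWeakPiece (D i)) (ha : a 0 = 1) {x : X}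
    (hx : gauge (weightedSum a D) x < 1) : x ∈ weightedSum a D :=
  setOfPred_gauge_lt_one_subset_self (weightedSum_convex hD)
    (mem_of_mem_nhds (weightedSum_mem_nhds hD ha))
    (absorbent_nhds_zero (weightedSum_mem_nhds hD ha)) hx

/-- `T` is compact as soon as it is arbitrarily small on suitable weak pieces, because each piece
provides a finite net of the unit ball. -/
lemma isCompactOperator_of_pieces {X Z : Type*} [NormedAddCommGroup X] [NormedSpace ℂ X]
    [NormedAddCommGroup Z] [NormedSpace ℂ Z] [CompleteSpace Z] (T : X →L[ℂ] Z)
    (h : ∀ ε > 0, ∃ E : Set X, IsWeakPiece E ∧ ∀ d ∈ E, ‖T d‖ < ε) : IsCompactOperator T := by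
  refine (isCompactOperator_iff_isCompact_closure_image_closedBall T.toLinearMap one_pos).2 ?_
  refine (TotallyBounded.closure ?_).isCompact_of_isClosed isClosed_closure
  refine totallyBounded_of_approx fun ε hε => ?_
  obtain ⟨E, hE, hTE⟩ := h (ε / 2) (half_pos hε)
  obtain ⟨F, hF, -, hnet⟩ := hE.net
  refine ⟨T '' F, (hF.image T).totallyBounded, ?_⟩
  rintro _ ⟨x, hx, rfl⟩
  obtain ⟨y, hy, d, hd, hxy⟩ := hnet x (mem_closedBall_zero_iff.1 hx)
  refine ⟨T y, ⟨y, hy, rfl⟩, ?_⟩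
  change dist (T x) (T y) < ε
  rw [dist_eq_norm, ← map_sub, hxy, T.map_smul_of_tower, norm_smul,
    Real.norm_of_nonneg (by norm_num)]
  linarith [hTE d hd]

lemma norm_partial_sum_le {X : Type*} [NormedAddCommGroup X] [NormedSpace ℂ X] {a : ℕ → ℝ}
    (ha : ∀ i, 0 ≤ a i) {d : ℕ → X} (hd : ∀ i, ‖d i‖ ≤ 1) (m : ℕ) :
    ‖∑ i ∈ Finset.range m, a i • d i‖ ≤ ∑ i ∈ Finset.range m, a i := by
  refine norm_sum_le_of_le _ fun i _ => ?_
  rw [norm_smul, Real.norm_of_nonneg (ha i)]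
  exact mul_le_of_le_one_right (ha i) (hd i)

lemma sum_Ico_half_pow_le (m n : ℕ) :
    ∑ i ∈ Finset.Ico m n, (1 / 2 : ℝ) ^ i ≤ 2 * (1 / 2) ^ m := by
  rcases le_total m n with h | h
  · rw [geom_sum_Ico (by norm_num) h]
    have : (0 : ℝ) < (1 / 2) ^ n := by positivity
    rw [show (1 / 2 - 1 : ℝ) = -(1 / 2) by norm_num, div_neg, ← sub_nonneg]
    ring_nf at this ⊢
    positivity
  · rw [Finset.Ico_eq_empty_of_le h, Finset.sum_empty]
    positivity

/-! ### The factorization -/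

/-- For nonnegative weights `a`, the pieces `D i` can be chosen so small that `f` is bounded on every
multiple of the unit ball of the gauge. For a point `k • ∑ aᵢ dᵢ` the partial sums with at least `k`
terms change `f` by at most `2⁻ⁱ` at step `i`, so `f` there differs by at most `2` from its value at
a point of a fixed norm ball. -/
lemma exists_pieces_bounded {X Y : Type u}
    [NormedAddCommGroup X] [NormedSpace ℂ X] [NormedAddCommGroup Y] [NormedSpace ℂ Y]
    {f : X → Y} (hf : ∀ B : Set X, Bornology.IsBounded B → WeaklyUnifContOn f B)
    (a : ℕ → ℝ) (ha : ∀ i, 0 ≤ a i) (ha0 : a 0 = 1) :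
    ∃ D : ℕ → Set X, (∀ i, IsWeakPiece (D i)) ∧
      ∀ k : ℕ, ∃ M, ∀ x, gauge (weightedSum a D) x < k → ‖f x‖ ≤ M := by
  -- the radius and the step size cover all multiples `k ≤ i` of the `i`-th partial sums
  choose D hD hDf using fun i : ℕ => exists_isWeakPiece hf
    (i * ∑ j ∈ Finset.range (i + 1), a j) (i * a i) ((1 / 2) ^ i)
    (mul_nonneg i.cast_nonneg (ha i)) (by positivity)
  refine ⟨D, hD, fun k => ?_⟩
  obtain ⟨M, hM⟩ := bounded_on_balls hf (k * ∑ j ∈ Finset.range k, a j)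
  refine ⟨M + 2, fun x hx => ?_⟩
  have hk : (0 : ℝ) < k := (gauge_nonneg x).trans_lt hx
  have hx1 : gauge (weightedSum a D) ((k : ℝ)⁻¹ • x) < 1 := by
    rw [gauge_smul_of_nonneg (by positivity), smul_eq_mul, inv_mul_lt_iff₀ hk]
    linarith
  obtain ⟨d, hd, m₀, hsum⟩ := mem_weightedSum_iff.1 (mem_of_gauge_lt_one hD ha0 hx1)
  let s : ℕ → X := fun m => (k : ℝ) • ∑ i ∈ Finset.range m, a i • d i
  have hs : ∀ m, ‖s m‖ ≤ k * ∑ i ∈ Finset.range m, a i := fun m => by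
    rw [norm_smul, Real.norm_of_nonneg hk.le]
    gcongr
    exact norm_partial_sum_le ha (fun i => (hD i).norm_le _ (hd i)) m
  have hstep : ∀ m, k ≤ m → dist (f (s m)) (f (s (m + 1))) ≤ (1 / 2) ^ m := by
    intro m hm
    have hkm : (k : ℝ) ≤ m := by exact_mod_cast hm
    have hpos : ∀ n, 0 ≤ ∑ i ∈ Finset.range n, a i := fun n => Finset.sum_nonneg fun i _ => ha i
    rw [dist_comm, dist_eq_norm]
    refine (hDf m _ _ ((hs _).trans ?_) ((hs _).trans ?_) (k * a m) ?_ ?_ (d m) (hd m) ?_).le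
    · exact mul_le_mul_of_nonneg_right hkm (hpos _)
    · refine mul_le_mul hkm ?_ (hpos _) m.cast_nonneg
      rw [Finset.sum_range_succ]
      linarith [ha m]
    · exact mul_nonneg hk.le (ha m)
    · exact mul_le_mul_of_nonneg_right hkm (ha m)
    · simp only [s]
      rw [Finset.sum_range_succ, smul_add, add_sub_cancel_left, smul_smul]
  have hx2 : x = s (max m₀ k) := by
    simp only [s]
    rw [← hsum _ (le_max_left _ _), smul_inv_smul₀ hk.ne']
  have h1 := dist_le_Ico_sum_of_dist_le (f := fun m => f (s m)) (le_max_right m₀ k)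
    (d := fun m => (1 / 2) ^ m) (fun hm _ => hstep _ hm)
  rw [← hx2, dist_comm, dist_eq_norm] at h1
  have h2 := sum_Ico_half_pow_le k (max m₀ k)
  have h3 : (1 / 2 : ℝ) ^ k ≤ 1 := pow_le_one₀ (by norm_num) (by norm_num)
  have h4 := hM (s k) (hs k)
  have h5 := norm_sub_norm_le (f x) (f (s k))
  linarith

/-- The canonical map from the completion for the weights `2 ^ i` to that for the weights `4 ^ i` is
compact: in a sum `∑ 2 ^ i • dᵢ` the head is bounded in `X`, and the tail is small for the second
gauge, since `dᵢ` has gauge at most `4⁻ⁱ`. -/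
lemma isCompactOperator_link {X Z₁ Z₂ : Type*} [NormedAddCommGroup X] [NormedSpace ℂ X]
    [NormedAddCommGroup Z₁] [NormedSpace ℂ Z₁]
    [NormedAddCommGroup Z₂] [NormedSpace ℂ Z₂] [CompleteSpace Z₂]
    {D : ℕ → Set X} (hD : ∀ i, IsWeakPiece (D i))
    (T₁ : X →L[ℂ] Z₁) (T₂ : X →L[ℂ] Z₂) (hd : DenseRange T₁) (hT₂ : IsCompactOperator T₂)
    (h₁ : ∀ x, ‖T₁ x‖ = gauge (weightedSum (fun i => 2 ^ i) D) x)
    (h₂ : ∀ x, ‖T₂ x‖ = gauge (weightedSum (fun i => 4 ^ i) D) x)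
    (J : Z₁ →L[ℂ] Z₂) (hJ : ∀ x, J (T₁ x) = T₂ x) : IsCompactOperator J := by
  have htb : TotallyBounded (T₂ '' weightedSum (fun i => 2 ^ i) D) := by
    refine totallyBounded_of_approx fun ε hε => ?_
    obtain ⟨N, hN⟩ := exists_pow_lt_of_lt_one (half_pos hε) (by norm_num : (1 / 2 : ℝ) < 1)
    refine ⟨T₂ '' Metric.closedBall 0 (∑ i ∈ Finset.range N, 2 ^ i), ?_, ?_⟩
    · exact (IsCompactOperator.isCompact_closure_image_closedBall (f := T₂.toLinearMap)
        hT₂ _).totallyBounded.subset subset_closure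
    · rintro _ ⟨x, hx, rfl⟩
      obtain ⟨d, hd, m₀, hsum⟩ := mem_weightedSum_iff.1 hx
      refine ⟨_, ⟨∑ i ∈ Finset.range N, (2 : ℝ) ^ i • d i, ?_, rfl⟩, ?_⟩
      · rw [mem_closedBall_zero_iff]
        exact norm_partial_sum_le (a := fun i => (2 : ℝ) ^ i) (fun i => by positivity)
          (fun i => (hD i).norm_le _ (hd i)) N
      · rw [hsum _ (le_max_left m₀ N), dist_eq_norm, ← map_sub,
          ← Finset.sum_Ico_eq_sub _ (le_max_right m₀ N), map_sum]
        have hterm : ∀ i, ‖T₂ ((2 : ℝ) ^ i • d i)‖ ≤ (1 / 2) ^ i := by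
          intro i
          rw [T₂.map_smul_of_tower, norm_smul, Real.norm_of_nonneg (by positivity), h₂]
          have := gauge_le_of_mem_piece (a := fun i => (4 : ℝ) ^ i) hD
            (i := i) (by positivity) (hd i)
          calc (2 : ℝ) ^ i * gauge (weightedSum (fun i => 4 ^ i) D) (d i)
              ≤ 2 ^ i * (4 ^ i)⁻¹ := by gcongr
            _ = (1 / 2) ^ i := by
              rw [← inv_pow, ← mul_pow]; norm_num
        calc ‖∑ i ∈ Finset.Ico N (max m₀ N), T₂ ((2 : ℝ) ^ i • d i)‖
            ≤ ∑ i ∈ Finset.Ico N (max m₀ N), (1 / 2 : ℝ) ^ i :=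
              norm_sum_le_of_le _ fun i _ => hterm i
          _ ≤ 2 * (1 / 2) ^ N := sum_Ico_half_pow_le _ _
          _ < ε := by linarith
  refine (isCompactOperator_iff_image_ball_subset_compact J.toLinearMap one_pos).2
    ⟨closure (T₂ '' weightedSum (fun i => 2 ^ i) D),
      htb.closure.isCompact_of_isClosed isClosed_closure, ?_⟩
  rintro _ ⟨z, hz, rfl⟩
  have hz' := Dense.open_subset_closure_inter hd Metric.isOpen_ball hz
  refine closure_mono ?_ (image_closure_subset_closure_image J.continuous ⟨z, hz', rfl⟩)
  rintro _ ⟨_, ⟨hx, x, rfl⟩, rfl⟩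
  refine ⟨x, mem_of_gauge_lt_one hD (pow_zero _) ?_, (hJ x).symm⟩
  rw [← h₁]
  exact mem_ball_zero_iff.1 hx

/-- Theorem (González–Gutiérrez). A holomorphic mapping `f` between complex Banach spaces is
weakly uniformly continuous on bounded sets if and only if `f = g ∘ S` for some compact
operator `S` and some holomorphic mapping `g` which is weakly uniformly continuous on bounded
sets. -/
theorem holomorphic_weaklyUnifCont_iff_factors_compact {X Y : Type u}
    [NormedAddCommGroup X] [NormedSpace ℂ X] [CompleteSpace X]
    [NormedAddCommGroup Y] [NormedSpace ℂ Y] [CompleteSpace Y]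
    (f : X → Y) (hf : ∀ x : X, AnalyticAt ℂ f x) :
    (∀ B : Set X, Bornology.IsBounded B → WeaklyUnifContOn f B) ↔
      ∃ (Z : Type u) (_ : NormedAddCommGroup Z) (_ : NormedSpace ℂ Z) (_ : CompleteSpace Z)
        (S : X →L[ℂ] Z) (g : Z → Y), IsCompactOperator S ∧
          (∀ z : Z, AnalyticAt ℂ g z) ∧
          (∀ B : Set Z, Bornology.IsBounded B → WeaklyUnifContOn g B) ∧
          f = g ∘ S := by
  constructor
  · intro hwu
    obtain ⟨D, hD, hbd⟩ := exists_pieces_bounded hwu (fun i => 4 ^ i) (fun i => by positivity)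
      (pow_zero _)
    obtain ⟨Z₁, _, _, _, T₁, hT₁, hd₁⟩ :=
      exists_banach_of_weightedSum (a := fun i => 2 ^ i) hD (pow_zero _)
    obtain ⟨Z₂, _, _, _, T₂, hT₂, hd₂⟩ :=
      exists_banach_of_weightedSum (a := fun i => 4 ^ i) hD (pow_zero _)
    -- any geometric weight of ratio `b > 1` gives a compact operator
    have hcpt : ∀ b : ℝ, 1 < b → ∀ ε > 0, ∃ E : Set X, IsWeakPiece E ∧
        ∀ d ∈ E, gauge (weightedSum (fun i => b ^ i) D) d < ε := by
      intro b hb ε hε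
      obtain ⟨N, hN⟩ := exists_pow_lt_of_lt_one hε (inv_lt_one_of_one_lt₀ hb)
      refine ⟨D N, hD N, fun d hd => ?_⟩
      have hpos : 0 < b ^ N := pow_pos (by linarith) N
      have := gauge_le_of_mem_piece (a := fun i => b ^ i) hD hpos hd
      exact this.trans_lt (by rwa [inv_pow] at hN)
    have hc₁ : IsCompactOperator T₁ := isCompactOperator_of_pieces T₁ fun ε hε => by
      simpa only [hT₁] using hcpt 2 (by norm_num) ε hε
    have hc₂ : IsCompactOperator T₂ := isCompactOperator_of_pieces T₂ fun ε hε => by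
      simpa only [hT₂] using hcpt 4 (by norm_num) ε hε
    have hle : ∀ x, ‖T₂ x‖ ≤ 1 * ‖T₁ x‖ := by
      intro x
      rw [hT₁, hT₂, one_mul]
      refine gauge_mono (absorbent_nhds_zero (weightedSum_mem_nhds hD (pow_zero _))) ?_ x
      exact weightedSum_mono hD (fun i => by positivity) (fun i => by positivity)
        fun i => pow_le_pow_left₀ (by norm_num) (by norm_num) i
    let J : Z₁ →L[ℂ] Z₂ := T₂.toLinearMap.extendOfNorm T₁.toLinearMap
    have hJ : ∀ x, J (T₁ x) = T₂ x := LinearMap.extendOfNorm_eq hd₁ ⟨1, hle⟩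
    have hJc := isCompactOperator_link hD T₁ T₂ hd₁ hc₂ hT₁ hT₂ J hJ
    obtain ⟨g, hg, hgf⟩ := exists_entire_factor T₂ hd₂ f hf fun k => by
      simpa only [hT₂] using hbd k
    refine ⟨Z₁, inferInstance, inferInstance, inferInstance, T₁, g ∘ J, hc₁, fun z => ?_,
      weaklyUnifContOn_comp_compact J hJc g
        (continuous_iff_continuousAt.2 fun z => (hg z).continuousAt), ?_⟩
    · exact (hg (J z)).comp (J.analyticAt z)
    · ext x
      simp [hJ, hgf]
  · rintro ⟨Z, _, _, _, S, g, -, -, hg, rfl⟩ B hB ε hε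
    obtain ⟨n, φ, δ, hδ, h⟩ := hg (S '' B) (S.lipschitz.isBounded_image hB) ε hε
    refine ⟨n, fun i => (φ i).comp S, δ, hδ, fun x hx y hy hxy => ?_⟩
    exact h (S x) ⟨x, hx, rfl⟩ (S y) ⟨y, hy, rfl⟩ fun i => by simpa using hxy i
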